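/- Let k be a field, n ≥ 1, and let μ_1, …, μ_s be positive integers with μ_1 + … + μ_s = n; put m_i = μ_1 + … + μ_i, and for t ≥ 1 set λ_t = #{ i : μ_i ≥ t }. Let W_i ⊆ k^n be the span of the first m_i standard basis vectors. Suppose N and N' are nilpotent endomorphisms of k^n such that dim_k ker(N^j) = dim_k ker(N'^j) = Σ_{t ≥ 1} min(λ_t, j) for every j ≥ 0, and such that N(W_i) ⊆ W_{i−1} and N'(W_i) ⊆ W_{i−1} for all 1 ≤ i ≤ s (with W_0 = 0). Then there exists an invertible linear automorphism g of k^n with g(W_i) = W_i for all i and N' = g ∘ N ∘ g^{−1}. -/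

import Mathlib

/-- The linear map `x ↦ ∑_{i < r} φ (N ^ (r - 1 - i) x) • N' ^ i v'`. If `φ` is dual to a Jordan
chain of length `r` of `N`, it carries that chain to the chain of `N'` generated by `v'`. -/
noncomputable def chainMap {k V V' : Type*} [Field k] [AddCommGroup V] [Module k V]
    [AddCommGroup V'] [Module k V'] (r : ℕ) (N : V →ₗ[k] V) (φ : V →ₗ[k] k)
    (N' : V' →ₗ[k] V') (v' : V') : V →ₗ[k] V' :=
  let w : ℕ → V' := fun i => (N' ^ i) v'
  ∑ i ∈ Finset.range r, (φ ∘ₗ (N ^ (r - 1 - i))).smulRight (w i)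

/-- `φ` is dual to the top of a Jordan chain of maximal length `r` generated by `v`. -/
structure IsDualChain {k V : Type*} [Field k] [AddCommGroup V] [Module k V]
    (r : ℕ) (N : V →ₗ[k] V) (φ : V →ₗ[k] k) (v : V) : Prop where
  pow_eq_zero : ∀ x, (N ^ r) x = 0
  apply_pow : ∀ j, φ ((N ^ j) v) = if j + 1 = r then 1 else 0

/-- The largest `N`-stable subspace of the kernel of `φ`. -/
def stableKer {k V : Type*} [Field k] [AddCommGroup V] [Module k V]
    (N : V →ₗ[k] V) (φ : V →ₗ[k] k) : Submodule k V where
  carrier := {x | ∀ l, φ ((N ^ l) x) = 0}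
  add_mem' := by
    intro a b ha hb l
    simp [ha l, hb l]
  zero_mem' := by simp
  smul_mem' := by
    intro c x hx l
    simp [hx l]

section Chain

variable {k V V' V'' : Type*} [Field k] [AddCommGroup V] [Module k V]
  [AddCommGroup V'] [Module k V'] [AddCommGroup V''] [Module k V'']

theorem chainMap_apply (r : ℕ) (N : V →ₗ[k] V) (φ : V →ₗ[k] k)
    (N' : V' →ₗ[k] V') (v' : V') (x : V) :
    chainMap r N φ N' v' x
      = ∑ i ∈ Finset.range r, φ ((N ^ (r - 1 - i)) x) • (N' ^ i) v' := by
  simp [chainMap]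

theorem pow_apply_eq_zero_of_le {N : V →ₗ[k] V} {x : V} {a b : ℕ} (hab : a ≤ b)
    (h : (N ^ a) x = 0) : (N ^ b) x = 0 := by
  obtain ⟨c, rfl⟩ := Nat.exists_eq_add_of_le' hab
  rw [pow_add, Module.End.mul_apply, h, map_zero]

theorem mem_stableKer {N : V →ₗ[k] V} {φ : V →ₗ[k] k} {x : V} :
    x ∈ stableKer N φ ↔ ∀ l, φ ((N ^ l) x) = 0 := Iff.rfl

theorem apply_mem_stableKer {N : V →ₗ[k] V} {φ : V →ₗ[k] k} :
    ∀ x ∈ stableKer N φ, N x ∈ stableKer N φ := by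
  intro x hx l
  have := hx (l + 1)
  rwa [pow_succ, Module.End.mul_apply] at this

theorem chainMap_eq_zero {r : ℕ} {N : V →ₗ[k] V} {φ : V →ₗ[k] k}
    (N' : V' →ₗ[k] V') (v' : V') {x : V} (hx : x ∈ stableKer N φ) :
    chainMap r N φ N' v' x = 0 := by
  rw [chainMap_apply]
  exact Finset.sum_eq_zero fun i _ => by rw [hx, zero_smul]

theorem chainMap_comm {r : ℕ} {N : V →ₗ[k] V} {φ : V →ₗ[k] k}
    {N' : V' →ₗ[k] V'} {v' : V'} (hN : ∀ x, (N ^ r) x = 0) (hN' : ∀ x, (N' ^ r) x = 0) (x : V) :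
    chainMap r N φ N' v' (N x) = N' (chainMap r N φ N' v' x) := by
  cases r with
  | zero => simp [chainMap_apply]
  | succ m =>
    simp only [chainMap_apply, map_sum, map_smul]
    rw [Finset.sum_range_succ', Finset.sum_range_succ]
    have h1 : φ ((N ^ (m + 1 - 1 - 0)) (N x)) = 0 := by
      rw [← Module.End.mul_apply, ← pow_succ]
      simpa using congrArg φ (hN x)
    have h2 : N' ((N' ^ m) v') = 0 := by
      rw [← Module.End.mul_apply, ← pow_succ']
      exact hN' v'
    rw [h1, h2, zero_smul, smul_zero]
    congr 1
    refine Finset.sum_congr rfl fun i hi => ?_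
    rw [← Module.End.mul_apply, ← pow_succ, ← Module.End.mul_apply, ← pow_succ']
    have : m + 1 - 1 - (i + 1) + 1 = m + 1 - 1 - i := by
      have := Finset.mem_range.1 hi
      omega
    rw [this]

theorem IsDualChain.apply_pow_sum {r : ℕ} {N : V →ₗ[k] V} {φ : V →ₗ[k] k} {v : V}
    (h : IsDualChain r N φ v) (f : ℕ → k) {l : ℕ} (hl : l < r) :
    φ ((N ^ l) (∑ i ∈ Finset.range r, f i • (N ^ i) v)) = f (r - 1 - l) := by
  simp only [map_sum, map_smul, ← Module.End.mul_apply, ← pow_add, h.apply_pow]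
  rw [Finset.sum_eq_single (r - 1 - l)]
  · rw [if_pos (by omega)]
    simp
  · intro b _ hb
    rw [if_neg (by omega), smul_zero]
  · intro hb
    exact absurd (Finset.mem_range.2 (by omega)) hb

theorem IsDualChain.apply_pow_chainMap {r : ℕ} {N : V →ₗ[k] V} {φ : V →ₗ[k] k}
    {N' : V' →ₗ[k] V'} {φ' : V' →ₗ[k] k} {v' : V'} (h' : IsDualChain r N' φ' v')
    (hN : ∀ x, (N ^ r) x = 0) (x : V) (l : ℕ) :
    φ' ((N' ^ l) (chainMap r N φ N' v' x)) = φ ((N ^ l) x) := by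
  by_cases hl : l < r
  · rw [chainMap_apply, h'.apply_pow_sum _ hl]
    congr 3
    omega
  · rw [pow_apply_eq_zero_of_le (not_lt.1 hl) (hN x),
      pow_apply_eq_zero_of_le (not_lt.1 hl) (h'.pow_eq_zero _), map_zero, map_zero]

theorem IsDualChain.chainMap_chainMap {r : ℕ} {N : V →ₗ[k] V} {φ : V →ₗ[k] k}
    {N' : V' →ₗ[k] V'} {φ' : V' →ₗ[k] k} {v' : V'} (h' : IsDualChain r N' φ' v')
    (hN : ∀ x, (N ^ r) x = 0) (N'' : V'' →ₗ[k] V'') (v'' : V'') (x : V) :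
    chainMap r N' φ' N'' v'' (chainMap r N φ N' v' x) = chainMap r N φ N'' v'' x := by
  rw [chainMap_apply, chainMap_apply r N φ N'' v'']
  exact Finset.sum_congr rfl fun i _ => by rw [h'.apply_pow_chainMap hN]

/-- The projection onto `stableKer N φ` along the span of the chain of `v`. -/
noncomputable def IsDualChain.proj {r : ℕ} {N : V →ₗ[k] V} {φ : V →ₗ[k] k} {v : V}
    (h : IsDualChain r N φ v) : V →ₗ[k] stableKer N φ :=
  LinearMap.codRestrict _ (LinearMap.id - chainMap r N φ N v) fun x l => by
    simp [h.apply_pow_chainMap h.pow_eq_zero]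

theorem IsDualChain.coe_proj {r : ℕ} {N : V →ₗ[k] V} {φ : V →ₗ[k] k} {v : V}
    (h : IsDualChain r N φ v) (x : V) : (h.proj x : V) = x - chainMap r N φ N v x := rfl

theorem IsDualChain.proj_coe {r : ℕ} {N : V →ₗ[k] V} {φ : V →ₗ[k] k} {v : V}
    (h : IsDualChain r N φ v) (x : stableKer N φ) : h.proj (x : V) = x := by
  ext
  rw [h.coe_proj, chainMap_eq_zero N v x.2, sub_zero]

theorem IsDualChain.proj_chainMap {r : ℕ} {N : V →ₗ[k] V} {φ : V →ₗ[k] k}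
    {N' : V' →ₗ[k] V'} {φ' : V' →ₗ[k] k} {v' : V'} (h' : IsDualChain r N' φ' v')
    (hN : ∀ x, (N ^ r) x = 0) (x : V) : h'.proj (chainMap r N φ N' v' x) = 0 := by
  ext
  rw [h'.coe_proj, h'.chainMap_chainMap hN]
  simp

theorem IsDualChain.proj_apply {r : ℕ} {N : V →ₗ[k] V} {φ : V →ₗ[k] k} {v : V}
    (h : IsDualChain r N φ v) (x : V) :
    h.proj (N x) = N.restrict apply_mem_stableKer (h.proj x) := by
  ext
  rw [LinearMap.coe_restrict_apply, h.coe_proj, h.coe_proj, map_sub,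
    chainMap_comm h.pow_eq_zero h.pow_eq_zero]

/-- Extend an isomorphism of complements of two chains of the same length. -/
noncomputable def IsDualChain.glue {r : ℕ} {N : V →ₗ[k] V} {φ : V →ₗ[k] k} {v : V}
    {N' : V' →ₗ[k] V'} {φ' : V' →ₗ[k] k} {v' : V'} (h : IsDualChain r N φ v)
    (h' : IsDualChain r N' φ' v') (e : stableKer N φ ≃ₗ[k] stableKer N' φ') : V ≃ₗ[k] V' :=
  LinearEquiv.ofLinearMap
    (chainMap r N φ N' v' + (stableKer N' φ').subtype ∘ₗ e.toLinearMap ∘ₗ h.proj)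
    (chainMap r N' φ' N v + (stableKer N φ).subtype ∘ₗ e.symm.toLinearMap ∘ₗ h'.proj)
    (by
      ext y
      simp [h.chainMap_chainMap h'.pow_eq_zero, h.proj_chainMap h'.pow_eq_zero, h.proj_coe,
        chainMap_eq_zero, h'.coe_proj])
    (by
      ext y
      simp [h'.chainMap_chainMap h.pow_eq_zero, h'.proj_chainMap h.pow_eq_zero, h'.proj_coe,
        chainMap_eq_zero, h.coe_proj])

theorem IsDualChain.glue_apply {r : ℕ} {N : V →ₗ[k] V} {φ : V →ₗ[k] k} {v : V}
    {N' : V' →ₗ[k] V'} {φ' : V' →ₗ[k] k} {v' : V'} (h : IsDualChain r N φ v)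
    (h' : IsDualChain r N' φ' v') (e : stableKer N φ ≃ₗ[k] stableKer N' φ') (x : V) :
    h.glue h' e x = chainMap r N φ N' v' x + e (h.proj x) := rfl

theorem IsDualChain.glue_symm {r : ℕ} {N : V →ₗ[k] V} {φ : V →ₗ[k] k} {v : V}
    {N' : V' →ₗ[k] V'} {φ' : V' →ₗ[k] k} {v' : V'} (h : IsDualChain r N φ v)
    (h' : IsDualChain r N' φ' v') (e : stableKer N φ ≃ₗ[k] stableKer N' φ') :
    (h.glue h' e).symm = h'.glue h e.symm := rfl

theorem IsDualChain.finrank_inf_stableKer [FiniteDimensional k V] {r : ℕ} {N : V →ₗ[k] V}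
    {φ : V →ₗ[k] k} {v : V} (h : IsDualChain r N φ v) (U : Submodule k V) {a : ℕ} (ha : a ≤ r)
    (hU : ∀ x ∈ U, (N ^ a) x = 0) (hv : ∀ l, r ≤ l + a → (N ^ l) v ∈ U) :
    Module.finrank k (U.comap (stableKer N φ).subtype) + a = Module.finrank k U := by
  let Φ : U →ₗ[k] (Fin a → k) := LinearMap.pi fun l => φ ∘ₗ (N ^ (l : ℕ)) ∘ₗ U.subtype
  have hΦ : ∀ x l, Φ x l = φ ((N ^ (l : ℕ)) x) := fun _ _ => rfl
  have hsurj : LinearMap.range Φ = ⊤ := by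
    rw [LinearMap.range_eq_top]
    intro c
    let f : ℕ → k := fun i => if hi : r - 1 - i < a then c ⟨r - 1 - i, hi⟩ else 0
    refine ⟨⟨∑ i ∈ Finset.range r, f i • (N ^ i) v, Submodule.sum_mem _ fun i hi => ?_⟩, ?_⟩
    · by_cases hia : r - 1 - i < a
      · exact U.smul_mem _ (hv i (by omega))
      · simp [f, hia]
    · ext l
      have hl : (l : ℕ) < r := l.2.trans_le ha
      rw [hΦ, h.apply_pow_sum f hl]
      have : r - 1 - (r - 1 - (l : ℕ)) = l := by omega
      simp [f, this]
  have hker : (LinearMap.ker Φ).map U.subtype = (U.comap (stableKer N φ).subtype).map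
      (stableKer N φ).subtype := by
    rw [Submodule.map_comap_subtype]
    ext x
    simp only [Submodule.mem_map, LinearMap.mem_ker, Submodule.subtype_apply, Subtype.exists,
      exists_and_right, exists_eq_right, Submodule.mem_inf, mem_stableKer]
    constructor
    · rintro ⟨hx, h0⟩
      refine ⟨fun l => ?_, hx⟩
      by_cases hl : l < a
      · simpa [hΦ] using congrFun h0 ⟨l, hl⟩
      · rw [pow_apply_eq_zero_of_le (not_lt.1 hl) (hU x hx), map_zero]
    · rintro ⟨h0, hx⟩
      exact ⟨hx, funext fun l => h0 l⟩
  have h1 := LinearMap.finrank_range_add_finrank_ker Φ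
  rw [hsurj, finrank_top, Module.finrank_fin_fun] at h1
  have h2 := congrArg (fun S : Submodule k V => Module.finrank k S) hker
  simp only [Submodule.finrank_map_subtype_eq] at h2
  omega

theorem exists_isDualChain {r : ℕ} (hr : 0 < r) {N : V →ₗ[k] V} (hN : ∀ x, (N ^ r) x = 0) {v : V}
    (hv : (N ^ (r - 1)) v ≠ 0) : ∃ φ : V →ₗ[k] k, IsDualChain r N φ v := by
  have key : ∀ m, ∃ φ : V →ₗ[k] k, φ ((N ^ (r - 1)) v) = 1 ∧
      ∀ j, r ≤ j + 1 + m → j + 1 < r → φ ((N ^ j) v) = 0 := by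
    intro m
    induction m with
    | zero =>
      obtain ⟨φ, hφ⟩ := Module.Projective.exists_dual_ne_zero k hv
      refine ⟨(φ ((N ^ (r - 1)) v))⁻¹ • φ, by simp [hφ], fun j _ _ => by omega⟩
    | succ m ih =>
      obtain ⟨φ, h1, h2⟩ := ih
      by_cases hm : m + 2 ≤ r
      · refine ⟨φ - φ ((N ^ (r - 2 - m)) v) • (φ ∘ₗ (N ^ (m + 1))), ?_, fun j hj1 hj2 => ?_⟩
        · simp only [LinearMap.sub_apply, LinearMap.smul_apply, LinearMap.comp_apply, h1,
            ← Module.End.mul_apply, ← pow_add]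
          rw [pow_apply_eq_zero_of_le (b := m + 1 + (r - 1)) (by omega) (hN v)]
          simp
        · simp only [LinearMap.sub_apply, LinearMap.smul_apply, LinearMap.comp_apply,
            ← Module.End.mul_apply, ← pow_add]
          by_cases hj : j = r - 2 - m
          · subst hj
            have : m + 1 + (r - 2 - m) = r - 1 := by omega
            rw [this, h1]
            simp
          · rw [h2 j (by omega) hj2, pow_apply_eq_zero_of_le (b := m + 1 + j) (by omega) (hN v)]
            simp
      · exact ⟨φ, h1, fun j _ hj => h2 j (by omega) hj⟩
  obtain ⟨φ, h1, h2⟩ := key r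
  refine ⟨φ, hN, fun j => ?_⟩
  split_ifs with hj
  · have : j = r - 1 := by omega
    rw [this, h1]
  · by_cases hjr : j + 1 < r
    · exact h2 j (by omega) hjr
    · rw [pow_apply_eq_zero_of_le (by omega) (hN v), map_zero]

end Chain

/-- `N` is strictly compatible with the filtration `W` whose graded pieces have dimensions `d`,
and the kernels of its powers are at most as large as those of a Richardson nilpotent. -/
structure IsRichardson {k V : Type*} [Field k] [AddCommGroup V] [Module k V]
    (s M : ℕ) (d : ℕ → ℕ) (N : V →ₗ[k] V) (W : ℕ → Submodule k V) : Prop where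
  mono : Monotone W
  top : W s = ⊤
  finrank_eq : ∀ i ≤ s, Module.finrank k (W i) = ∑ j ∈ Finset.range i, d j
  apply_mem : ∀ i < s, ∀ x ∈ W (i + 1), N x ∈ W i
  finrank_ker_le : ∀ j, Module.finrank k (LinearMap.ker (N ^ j))
    ≤ ∑ t ∈ Finset.range M, min ((Finset.range s).filter (fun i => t < d i)).card j

/-- The number of indices `j < i` with `0 < d j`. -/
def posCount (d : ℕ → ℕ) (i : ℕ) : ℕ := ((Finset.range i).filter (fun j => 0 < d j)).card

theorem posCount_succ (d : ℕ → ℕ) (i : ℕ) :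
    posCount d (i + 1) = posCount d i + if 0 < d i then 1 else 0 := by
  unfold posCount
  rw [Finset.range_add_one, Finset.filter_insert]
  split_ifs <;> simp

theorem posCount_mono (d : ℕ → ℕ) : Monotone (posCount d) :=
  monotone_nat_of_le_succ fun i => by rw [posCount_succ]; omega

theorem sum_pred_add_posCount (d : ℕ → ℕ) (i : ℕ) :
    ∑ j ∈ Finset.range i, (d j - 1) + posCount d i = ∑ j ∈ Finset.range i, d j := by
  induction i with
  | zero => simp [posCount]
  | succ i ih =>
    rw [Finset.sum_range_succ, Finset.sum_range_succ, posCount_succ]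
    split_ifs <;> omega

namespace IsRichardson

variable {k V : Type*} [Field k] [AddCommGroup V] [Module k V]
  {s M : ℕ} {d : ℕ → ℕ} {N : V →ₗ[k] V} {W : ℕ → Submodule k V}

theorem finrank_total (h : IsRichardson s M d N W) :
    Module.finrank k V = ∑ j ∈ Finset.range s, d j := by
  rw [← h.finrank_eq s le_rfl, h.top, finrank_top]

theorem exists_pow_apply_ne_zero (h : IsRichardson s (M + 1) d N W) (hr : 0 < posCount d s) :
    ∃ v, (N ^ (posCount d s - 1)) v ≠ 0 := by
  by_contra! hcon
  have h1 := h.finrank_ker_le (posCount d s - 1)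
  rw [LinearMap.ker_eq_top.2 (LinearMap.ext hcon), finrank_top, h.finrank_total] at h1
  have h2 : ∑ t ∈ Finset.range (M + 1), ((Finset.range s).filter (fun i => t < d i)).card
      ≤ ∑ j ∈ Finset.range s, d j := by
    simp only [Finset.card_filter]
    rw [Finset.sum_comm]
    refine Finset.sum_le_sum fun i _ => ?_
    rw [← Finset.card_filter]
    calc _ ≤ (Finset.range (d i)).card := Finset.card_le_card fun t ht => by simp_all
      _ = d i := Finset.card_range _
  have h3 : ∑ t ∈ Finset.range (M + 1),
      min ((Finset.range s).filter (fun i => t < d i)).card (posCount d s - 1)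
      < ∑ t ∈ Finset.range (M + 1), ((Finset.range s).filter (fun i => t < d i)).card := by
    refine Finset.sum_lt_sum (fun t _ => min_le_left _ _) ⟨0, by simp, ?_⟩
    change min (posCount d s) _ < posCount d s
    omega
  omega

variable [FiniteDimensional k V]

theorem succ_eq (h : IsRichardson s M d N W) {i : ℕ} (hi : i < s) (hd : d i = 0) :
    W (i + 1) = W i := by
  symm
  refine Submodule.eq_of_le_of_finrank_eq (h.mono i.le_succ) ?_
  rw [h.finrank_eq i hi.le, h.finrank_eq (i + 1) hi, Finset.sum_range_succ, hd, add_zero]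

theorem pow_posCount_apply (h : IsRichardson s M d N W) :
    ∀ i ≤ s, ∀ x ∈ W i, (N ^ posCount d i) x = 0 := by
  intro i
  induction i with
  | zero =>
    intro hi x hx
    have h0 := h.finrank_eq 0 hi
    rw [Finset.sum_range_zero, Submodule.finrank_eq_zero] at h0
    rw [h0, Submodule.mem_bot] at hx
    rw [hx, map_zero]
  | succ i ih =>
    intro hi x hx
    rw [posCount_succ]
    split_ifs with hd
    · rw [pow_succ, Module.End.mul_apply]
      exact ih (by omega) _ (h.apply_mem i hi x hx)
    · rw [h.succ_eq hi (by omega)] at hx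
      exact ih (by omega) x hx

theorem pow_apply_mem (h : IsRichardson s M d N W) {i : ℕ} (hi : i ≤ s) :
    ∀ a, posCount d s ≤ a + posCount d i → ∀ x, (N ^ a) x ∈ W i := by
  induction hi using Nat.decreasingInduction with
  | self =>
    intro a _ x
    rw [h.top]
    trivial
  | of_succ i hi ih =>
    intro a ha x
    rw [posCount_succ] at ih
    split_ifs at ih with hd
    · cases a with
      | zero =>
        have h1 := posCount_mono d (show i + 1 ≤ s from hi)
        rw [posCount_succ, if_pos hd] at h1
        omega
      | succ a =>
        rw [pow_succ', Module.End.mul_apply]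
        exact h.apply_mem i hi _ (ih a (by omega) x)
    · rw [← h.succ_eq hi (by omega)]
      exact ih a (by omega) x

theorem pow_eq_zero (h : IsRichardson s M d N W) (x : V) : (N ^ posCount d s) x = 0 :=
  h.pow_posCount_apply s le_rfl x (by rw [h.top]; trivial)

theorem finrank_eq_zero (h : IsRichardson s M d N W) (h0 : M = 0 ∨ posCount d s = 0) :
    Module.finrank k V = 0 := by
  rcases h0 with rfl | h0
  · have h1 := h.finrank_ker_le (posCount d s)
    have h2 : LinearMap.ker (N ^ posCount d s) = ⊤ :=
      LinearMap.ker_eq_top.2 (LinearMap.ext h.pow_eq_zero)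
    rw [h2, finrank_top] at h1
    simpa using h1
  · have : Subsingleton V := ⟨fun x y => by
      have hx := h.pow_eq_zero x
      have hy := h.pow_eq_zero y
      rw [h0] at hx hy
      simp only [pow_zero, Module.End.one_apply] at hx hy
      rw [hx, hy]⟩
    exact Module.finrank_zero_of_subsingleton

theorem restrict (h : IsRichardson s (M + 1) d N W) {φ : V →ₗ[k] k} {v : V}
    (hc : IsDualChain (posCount d s) N φ v) :
    IsRichardson s M (fun i => d i - 1) (N.restrict (apply_mem_stableKer (φ := φ)))
      (fun i => (W i).comap (stableKer N φ).subtype) where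
  mono := fun i j hij => Submodule.comap_mono (h.mono hij)
  top := by simp [h.top]
  finrank_eq := fun i hi => by
    have h1 := hc.finrank_inf_stableKer (W i) (posCount_mono d hi) (h.pow_posCount_apply i hi)
      (fun l hl => h.pow_apply_mem hi l hl v)
    have h2 := sum_pred_add_posCount d i
    rw [h.finrank_eq i hi] at h1
    omega
  apply_mem := fun i hi x hx => h.apply_mem i hi x hx
  finrank_ker_le := fun j => by
    have hker : LinearMap.ker (N.restrict (apply_mem_stableKer (φ := φ)) ^ j)
        = (LinearMap.ker (N ^ j)).comap (stableKer N φ).subtype := by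
      ext x
      rw [LinearMap.mem_ker, Module.End.pow_restrict, Submodule.mem_comap, LinearMap.mem_ker,
        ← Submodule.coe_eq_zero, LinearMap.coe_restrict_apply, Submodule.subtype_apply]
    have h1 := hc.finrank_inf_stableKer (LinearMap.ker (N ^ j))
      (min_le_left (posCount d s) j) (fun x hx => by
        rcases le_total (posCount d s) j with hj | hj
        · rw [min_eq_left hj]
          exact hc.pow_eq_zero x
        · rw [min_eq_right hj]
          exact hx)
      (fun l hl => by
        rw [LinearMap.mem_ker, ← Module.End.mul_apply, ← pow_add]
        exact pow_apply_eq_zero_of_le (by omega) (hc.pow_eq_zero v))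
    have h2 := h.finrank_ker_le j
    rw [Finset.sum_range_succ'] at h2
    rw [hker]
    simp only [Nat.lt_sub_iff_add_lt]
    change _ ≤ _ + min (posCount d s) j at h2
    omega

end IsRichardson

theorem IsRichardson.chainMap_mem {k V V' : Type*} [Field k] [AddCommGroup V] [Module k V]
    [FiniteDimensional k V] [AddCommGroup V'] [Module k V']
    {s M : ℕ} {d : ℕ → ℕ} {N : V →ₗ[k] V} {W : ℕ → Submodule k V} (h : IsRichardson s M d N W)
    {φ : V →ₗ[k] k} {N' : V' →ₗ[k] V'} {v' : V'} {U : Submodule k V'} {i : ℕ} (hi : i ≤ s)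
    {x : V} (hx : x ∈ W i) (hU : ∀ a, posCount d s ≤ a + posCount d i → (N' ^ a) v' ∈ U) :
    chainMap (posCount d s) N φ N' v' x ∈ U := by
  rw [chainMap_apply]
  refine Submodule.sum_mem _ fun j hj => ?_
  by_cases hji : posCount d i ≤ posCount d s - 1 - j
  · rw [pow_apply_eq_zero_of_le hji (h.pow_posCount_apply i hi x hx), map_zero, zero_smul]
    exact U.zero_mem
  · exact U.smul_mem _ (hU j (by omega))

theorem IsRichardson.glue_mem {k V V' : Type*} [Field k] [AddCommGroup V] [Module k V]
    [FiniteDimensional k V] [AddCommGroup V'] [Module k V'] [FiniteDimensional k V']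
    {s M M' : ℕ} {d : ℕ → ℕ} {N : V →ₗ[k] V} {W : ℕ → Submodule k V}
    {N' : V' →ₗ[k] V'} {W' : ℕ → Submodule k V'}
    (h : IsRichardson s M d N W) (h' : IsRichardson s M' d N' W')
    {φ : V →ₗ[k] k} {v : V} (hc : IsDualChain (posCount d s) N φ v)
    {φ' : V' →ₗ[k] k} {v' : V'} (hc' : IsDualChain (posCount d s) N' φ' v')
    (e : stableKer N φ ≃ₗ[k] stableKer N' φ') {i : ℕ} (hi : i ≤ s)
    (he : ∀ x : stableKer N φ, (x : V) ∈ W i → (e x : V') ∈ W' i) {x : V} (hx : x ∈ W i) :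
    hc.glue hc' e x ∈ W' i := by
  rw [hc.glue_apply]
  refine (W' i).add_mem (h.chainMap_mem hi hx fun a ha => h'.pow_apply_mem hi a ha v') (he _ ?_)
  rw [hc.coe_proj]
  exact (W i).sub_mem hx (h.chainMap_mem hi hx fun a ha => h.pow_apply_mem hi a ha v)

/-- Two Richardson nilpotents on filtered spaces with the same graded dimensions are isomorphic. -/
theorem IsRichardson.exists_equiv {k : Type*} [Field k] {s M : ℕ} : ∀ {V V' : Type*}
    [AddCommGroup V] [Module k V] [FiniteDimensional k V]
    [AddCommGroup V'] [Module k V'] [FiniteDimensional k V']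
    {d : ℕ → ℕ} {N : V →ₗ[k] V} {W : ℕ → Submodule k V}
    {N' : V' →ₗ[k] V'} {W' : ℕ → Submodule k V'}
    (_ : IsRichardson s M d N W) (_ : IsRichardson s M d N' W'),
    ∃ g : V ≃ₗ[k] V', (∀ x, g (N x) = N' (g x)) ∧ ∀ i ≤ s, ∀ x, g x ∈ W' i ↔ x ∈ W i := by
  have trivial_case : ∀ {M : ℕ} {V V' : Type _}
      [AddCommGroup V] [Module k V] [FiniteDimensional k V]
      [AddCommGroup V'] [Module k V'] [FiniteDimensional k V']
      {d : ℕ → ℕ} {N : V →ₗ[k] V} {W : ℕ → Submodule k V}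
      {N' : V' →ₗ[k] V'} {W' : ℕ → Submodule k V'}
      (_ : IsRichardson s M d N W) (_ : IsRichardson s M d N' W')
      (_ : M = 0 ∨ posCount d s = 0),
      ∃ g : V ≃ₗ[k] V', (∀ x, g (N x) = N' (g x)) ∧ ∀ i ≤ s, ∀ x, g x ∈ W' i ↔ x ∈ W i := by
    intro M V V' _ _ _ _ _ _ d N W N' W' h h' h0
    have h1 := h.finrank_eq_zero h0
    have h2 := h'.finrank_eq_zero h0
    have : Subsingleton V := Module.finrank_zero_iff.1 h1
    have : Subsingleton V' := Module.finrank_zero_iff.1 h2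
    refine ⟨LinearEquiv.ofFinrankEq V V' (h1.trans h2.symm), fun x => Subsingleton.elim _ _,
      fun i _ x => ?_⟩
    rw [Subsingleton.elim x 0, map_zero]
    simp
  induction M with
  | zero =>
    intro V V' _ _ _ _ _ _ d N W N' W' h h'
    exact trivial_case h h' (Or.inl rfl)
  | succ M ih =>
    intro V V' _ _ _ _ _ _ d N W N' W' h h'
    rcases Nat.eq_zero_or_pos (posCount d s) with hr | hr
    · exact trivial_case h h' (Or.inr hr)
    obtain ⟨v, hv⟩ := h.exists_pow_apply_ne_zero hr
    obtain ⟨φ, hc⟩ := exists_isDualChain hr h.pow_eq_zero hv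
    obtain ⟨v', hv'⟩ := h'.exists_pow_apply_ne_zero hr
    obtain ⟨φ', hc'⟩ := exists_isDualChain hr h'.pow_eq_zero hv'
    obtain ⟨e, he1, he2⟩ := ih (h.restrict hc) (h'.restrict hc')
    refine ⟨hc.glue hc' e, fun x => ?_, fun i hi x => ⟨fun hx => ?_, fun hx => ?_⟩⟩
    · rw [hc.glue_apply, hc.glue_apply, chainMap_comm hc.pow_eq_zero hc'.pow_eq_zero,
        hc.proj_apply, he1, map_add, LinearMap.coe_restrict_apply]
    · have := h'.glue_mem h hc' hc e.symm hi (fun y hy => by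
        have := he2 i hi (e.symm y)
        rw [e.apply_symm_apply] at this
        exact this.1 hy) hx
      rwa [← hc.glue_symm, LinearEquiv.symm_apply_apply] at this
    · exact h.glue_mem h' hc hc' e hi (fun y hy => (he2 i hi y).2 hy) hx

theorem finrank_span_single_image_lt (k : Type*) [Field k] {n m : ℕ} (hm : m ≤ n) :
    Module.finrank k (Submodule.span k
      ((fun j : Fin n => (Pi.single j 1 : Fin n → k)) '' {j : Fin n | (j : ℕ) < m})) = m := by
  have hfun : (fun j : Fin n => (Pi.single j 1 : Fin n → k)) = Pi.basisFun k (Fin n) := by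
    ext j
    simp
  rw [hfun]
  refine (Pi.dim_spanSubset (R := k) (s := {j : Fin n | (j : ℕ) < m})).trans ?_
  rw [Set.ncard_eq_toFinset_card', Set.toFinset_ofPred, Fin.card_filter_val_lt]
  omega

/-- Remark 2.7, `O_P ∩ n_P⁺` is a single `P`-orbit: two nilpotent endomorphisms of `kⁿ` of
Jordan type the conjugate partition `λ` of `μ`, both strictly compatible with the standard
flag `W₀ ⊆ W₁ ⊆ … ⊆ W_s` of type `μ` (i.e. `N(Wᵢ) ⊆ W_{i-1}`), are conjugate by a linear
automorphism `g` preserving each `Wᵢ`. -/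
theorem stmt_7 (k : Type*) [Field k] (n s : ℕ) (hn : 1 ≤ n)
    (μ : Fin s → ℕ) (hμpos : ∀ i, 0 < μ i) (hμsum : ∑ i, μ i = n)
    (mμ : ℕ → ℕ)
    (hmμ : ∀ i, mμ i = ∑ j ∈ Finset.univ.filter (fun j : Fin s => (j : ℕ) < i), μ j)
    (lam : ℕ → ℕ)
    (hlam : ∀ t, lam t = (Finset.univ.filter (fun i : Fin s => t ≤ μ i)).card)
    (W : ℕ → Submodule k (Fin n → k))
    (hW : ∀ i, W i = Submodule.span k
      ((fun j : Fin n => (Pi.single j 1 : Fin n → k)) '' {j : Fin n | (j : ℕ) < mμ i}))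
    (N N' : (Fin n → k) →ₗ[k] (Fin n → k))
    (hNnil : IsNilpotent N) (hN'nil : IsNilpotent N')
    (hNker : ∀ j : ℕ, Module.finrank k (LinearMap.ker (N ^ j))
      = ∑ t ∈ Finset.Icc 1 n, min (lam t) j)
    (hN'ker : ∀ j : ℕ, Module.finrank k (LinearMap.ker (N' ^ j))
      = ∑ t ∈ Finset.Icc 1 n, min (lam t) j)
    (hNW : ∀ i, 1 ≤ i → i ≤ s → Submodule.map N (W i) ≤ W (i - 1))
    (hN'W : ∀ i, 1 ≤ i → i ≤ s → Submodule.map N' (W i) ≤ W (i - 1)) :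
    ∃ g : (Fin n → k) ≃ₗ[k] (Fin n → k),
      (∀ i, i ≤ s → Submodule.map (g : (Fin n → k) →ₗ[k] (Fin n → k)) (W i) = W i) ∧
      ∀ v, N' v = g (N (g.symm v)) := by
  let d : ℕ → ℕ := fun i => if hi : i < s then μ ⟨i, hi⟩ else 0
  have hd : ∀ i : Fin s, d i = μ i := fun i => by simp [d]
  have hmd : ∀ i ≤ s, mμ i = ∑ j ∈ Finset.range i, d j := by
    intro i hi
    rw [hmμ, Finset.sum_filter, ← Finset.sum_congr rfl fun j _ => by rw [← hd j],
      Fin.sum_univ_eq_sum_range (fun j => if j < i then d j else 0) s, ← Finset.sum_filter]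
    refine Finset.sum_congr ?_ fun _ _ => rfl
    ext j
    simp only [Finset.mem_filter, Finset.mem_range]
    omega
  have hmmono : Monotone mμ := by
    intro i j hij
    rw [hmμ, hmμ]
    refine Finset.sum_le_sum_of_subset fun x hx => ?_
    simp only [Finset.mem_filter, Finset.mem_univ, true_and] at hx ⊢
    omega
  have hms : mμ s = n := by
    rw [hmμ, ← hμsum]
    simp
  have hWmono : Monotone W := by
    intro i j hij
    rw [hW, hW]
    exact Submodule.span_mono (Set.image_mono fun x hx => lt_of_lt_of_le hx (hmmono hij))
  have hWfin : ∀ i ≤ s, Module.finrank k (W i) = mμ i := fun i hi => by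
    rw [hW, finrank_span_single_image_lt k ((hmmono hi).trans hms.le)]
  have hWtop : W s = ⊤ := by
    refine Submodule.eq_top_of_finrank_eq ?_
    rw [hWfin s le_rfl, hms, Module.finrank_fin_fun]
  have hlamd : ∀ t, lam (t + 1) = ((Finset.range s).filter (fun i => t < d i)).card := by
    intro t
    rw [hlam, Finset.card_filter, Finset.card_filter,
      ← Fin.sum_univ_eq_sum_range (fun j => if t < d j then 1 else 0) s]
    refine Finset.sum_congr rfl fun i _ => ?_
    rw [hd]
    rfl
  have hsum : ∀ j, ∑ t ∈ Finset.Icc 1 n, min (lam t) j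
      = ∑ t ∈ Finset.range n, min ((Finset.range s).filter (fun i => t < d i)).card j := by
    intro j
    simp only [← hlamd]
    rw [Finset.range_eq_Ico, Finset.sum_Ico_add' (fun t => min (lam t) j) 0 n 1]
    rfl
  have main : ∀ A : (Fin n → k) →ₗ[k] (Fin n → k),
      (∀ j : ℕ, Module.finrank k (LinearMap.ker (A ^ j)) = ∑ t ∈ Finset.Icc 1 n, min (lam t) j) →
      (∀ i, 1 ≤ i → i ≤ s → Submodule.map A (W i) ≤ W (i - 1)) → IsRichardson s n d A W :=
    fun A hker hAW =>
      { mono := hWmono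
        top := hWtop
        finrank_eq := fun i hi => (hWfin i hi).trans (hmd i hi)
        apply_mem := fun i hi x hx =>
          hAW (i + 1) (by omega) hi (Submodule.mem_map_of_mem hx)
        finrank_ker_le := fun j => ((hker j).trans (hsum j)).le }
  obtain ⟨g, hg1, hg2⟩ := (main N hNker hNW).exists_equiv (main N' hN'ker hN'W)
  refine ⟨g, fun i hi => ?_, fun v => by rw [hg1, g.apply_symm_apply]⟩
  ext x
  constructor
  · rintro ⟨y, hy, rfl⟩
    exact (hg2 i hi y).2 hy
  · intro hx
    refine ⟨g.symm x, ?_, g.apply_symm_apply x⟩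
    have := hg2 i hi (g.symm x)
    rw [g.apply_symm_apply] at this
    exact this.1 hx
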